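/- Let G be a finite graph with vertex set V, let P be a hereditary property on G, and let v ∈ V. Then MaxSol_P(G) is exactly the set of those S belonging to MaxSol_P(G[V∖{v}]) ∪ ⋃_{H ∈ MaxSol_P(G[V∖{v}])} MaxSol_P(G[H ∪ {v}]) that are maximal P-subgraphs of G. -/

import Mathlib

/-- `S` is a maximal `P`-subgraph of `G[W]`: `S ⊆ W`, `P S` holds, and no `T`
with `S ⊊ T ⊆ W` satisfies `P`. -/
def MaximalPIn {V : Type*} (P : Set V → Prop) (W S : Set V) : Prop :=
  S ⊆ W ∧ P S ∧ ∀ T : Set V, S ⊂ T → T ⊆ W → ¬ P T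

/-!
A maximal `P`-subgraph `M` avoiding `v` remains maximal in `G[V ∖ {v}]`. If `M` contains `v`, then
`M ∖ {v}` satisfies `P` by heredity, so it extends to a maximal `P`-subgraph `H` of `G[V ∖ {v}]`;
now `M ⊆ H ∪ {v}`, and `M` remains maximal in the smaller ground set `H ∪ {v}`.
-/

section

variable {V : Type*} {P : Set V → Prop} {W M : Set V} {v : V}

theorem maximalPIn_iff_maximal :
    MaximalPIn P W M ↔ Maximal (fun T ↦ P T ∧ T ⊆ W) M := by
  simp only [MaximalPIn, Set.maximal_iff_forall_ssuperset]
  grind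

theorem MaximalPIn.of_subset {W' : Set V} (hM : MaximalPIn P W M) (hMW' : M ⊆ W')
    (hW'W : W' ⊆ W) : MaximalPIn P W' M :=
  ⟨hMW', hM.2.1, fun T hMT hTW' ↦ hM.2.2 T hMT (hTW'.trans hW'W)⟩

theorem existsMaximalSubsetProperty_of_finite (hW : W.Finite) :
    Matroid.ExistsMaximalSubsetProperty P W :=
  fun _ hPS hSW ↦ (hW.finite_subsets.subset fun _ hT ↦ hT.2).exists_le_maximal ⟨hPS, hSW⟩

theorem MaximalPIn.sdiff_singleton_of_notMem (hM : MaximalPIn P W M) (hv : v ∉ M) :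
    MaximalPIn P (W \ {v}) M :=
  hM.of_subset (Set.subset_sdiff_singleton hM.1 hv) Set.sdiff_subset

theorem MaximalPIn.exists_insert_of_mem (hM : MaximalPIn P W M) (hPMv : P (M \ {v}))
    (hext : Matroid.ExistsMaximalSubsetProperty P (W \ {v})) (hv : v ∈ M) :
    ∃ H, MaximalPIn P (W \ {v}) H ∧ MaximalPIn P (insert v H) M := by
  obtain ⟨H, hMH, hHmax⟩ := hext (M \ {v}) hPMv (Set.sdiff_subset_sdiff_left hM.1)
  have hH : MaximalPIn P (W \ {v}) H := maximalPIn_iff_maximal.2 hHmax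
  have hM_insert : M ⊆ insert v H := Set.sdiff_singleton_subset_iff.1 hMH
  have h_insert_W : insert v H ⊆ W :=
    Set.insert_subset (hM.1 hv) (hH.1.trans Set.sdiff_subset)
  exact ⟨H, hH, hM.of_subset hM_insert h_insert_W⟩

theorem maxSol_eq_filter_candidates_general (hered : ∀ S T : Set V, P S → T ⊆ S → P T)
    (hext : Matroid.ExistsMaximalSubsetProperty P (W \ {v})) :
    {M : Set V | MaximalPIn P W M} =
      {S : Set V |
        (MaximalPIn P (W \ {v}) S ∨
          ∃ H : Set V, MaximalPIn P (W \ {v}) H ∧ MaximalPIn P (insert v H) S) ∧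
        MaximalPIn P W S} := by
  ext M
  refine ⟨fun hM ↦ ⟨?_, hM⟩, And.right⟩
  by_cases hv : v ∈ M
  · exact .inr (hM.exists_insert_of_mem (hered M _ hM.2.1 Set.sdiff_subset) hext hv)
  · exact .inl (hM.sdiff_singleton_of_notMem hv)

end

/-- for a hereditary property `P` on a finite graph `G` and a
vertex `v`, `MaxSol_P(G)` is exactly the set of those `S` in
`MaxSol_P(G[V ∖ {v}]) ∪ ⋃_{H ∈ MaxSol_P(G[V ∖ {v}])} MaxSol_P(G[H ∪ {v}])`
that are maximal `P`-subgraphs of `G`. -/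
theorem maxSol_eq_filter_candidates {V : Type*} [Fintype V] (G : SimpleGraph V)
    (P : Set V → Prop) (hered : ∀ S T : Set V, P S → T ⊆ S → P T) (v : V) :
    {M : Set V | MaximalPIn P Set.univ M} =
      {S : Set V |
        (MaximalPIn P (Set.univ \ {v}) S ∨
          ∃ H : Set V, MaximalPIn P (Set.univ \ {v}) H ∧
            MaximalPIn P (insert v H) S) ∧
        MaximalPIn P Set.univ S} :=
  maxSol_eq_filter_candidates_general hered
    (existsMaximalSubsetProperty_of_finite (Set.toFinite _))
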